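/- arXiv:2401.02381 — 2 statements merged into one kernel-verified Lean document; each statement's English description precedes it below -/
import Mathlib

section
/- The sum-of-absolute-error cost SAE is 2-partition ordered minimizable: for every finite multiset Ω of reals and every partition of Ω into two nonempty multisets A, B there exist pairwise ordered multisets L, R with L + R = Ω, whose multiset of cardinalities {|L|,|R|} equals {|A|,|B|}, and with SAE(L) + SAE(R) ≤ SAE(A) + SAE(B). -/
/-- Two multisets of reals are pairwise ordered iff every element of one is
less than or equal to every element of the other. -/
def PairwiseOrdered (A B : Multiset ℝ) : Prop :=
  (∀ a ∈ A, ∀ b ∈ B, a ≤ b) ∨ (∀ a ∈ A, ∀ b ∈ B, b ≤ a)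

/-- Sum of absolute error: `SAE(X) = min_{m∈ℝ} Σ_{x∈X} |x − m|`
(the minimum is attained at a median of `X`). -/
noncomputable def SAE (X : Multiset ℝ) : ℝ :=
  sInf (Set.range fun m : ℝ => (X.map (fun x => |x - m|)).sum)

lemma sae_le (X : Multiset ℝ) (m : ℝ) : SAE X ≤ (X.map (fun x => |x - m|)).sum := by
  apply csInf_le
  · refine ⟨0, ?_⟩
    rintro _ ⟨m, rfl⟩
    apply Multiset.sum_nonneg
    intro y hy
    obtain ⟨x, _, rfl⟩ := Multiset.mem_map.1 hy
    exact abs_nonneg _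
  · exact ⟨m, rfl⟩

lemma sae_approx (X : Multiset ℝ) (e : ℝ) (he : 0 < e) :
    ∃ m : ℝ, (X.map (fun x => |x - m|)).sum < SAE X + e := by
  obtain ⟨_, ⟨m, rfl⟩, h⟩ := exists_lt_of_csInf_lt
    (s := Set.range fun m : ℝ => (X.map (fun x => |x - m|)).sum)
    (Set.range_nonempty _) (lt_add_of_pos_right (SAE X) he)
  exact ⟨m, h⟩

lemma split_exists (Ω : Multiset ℝ) (k : ℕ) (hk : k ≤ Multiset.card Ω) :
    ∃ L R : Multiset ℝ, L + R = Ω ∧ Multiset.card L = k ∧ ∀ a ∈ L, ∀ b ∈ R, a ≤ b := by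
  set l := Ω.sort (· ≤ ·) with hl
  have hs : l.Pairwise (· ≤ ·) := Multiset.pairwise_sort Ω (· ≤ ·)
  have hΩ : (l : Multiset ℝ) = Ω := Multiset.sort_eq Ω (· ≤ ·)
  refine ⟨(l.take k : List ℝ), (l.drop k : List ℝ), ?_, ?_, ?_⟩
  · rw [Multiset.coe_add, List.take_append_drop, hΩ]
  · rw [← hΩ] at hk
    simpa using hk
  · rw [← List.take_append_drop k l, List.pairwise_append] at hs
    intro a ha b hb
    exact hs.2.2 a (by simpa using ha) b (by simpa using hb)

lemma sum_map_mono_aux (A L R B : Multiset ℝ) (f : ℝ → ℝ) (hf : Monotone f)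
    (h : L + R = A + B) (hc : Multiset.card L = Multiset.card A)
    (ho : ∀ a ∈ L, ∀ b ∈ R, a ≤ b) : (L.map f).sum ≤ (A.map f).sum := by
  have h1 : L - A + L ∩ A = L := Multiset.sub_add_inter L A
  have h2 : A - L + L ∩ A = A := by rw [Multiset.inter_comm]; exact Multiset.sub_add_inter A L
  have hR : A - L ≤ R := by
    rw [tsub_le_iff_left, h]; exact Multiset.le_add_right _ _
  have hc' : Multiset.card (L - A) = Multiset.card (A - L) := by
    have e1 := congrArg Multiset.card h1
    have e2 := congrArg Multiset.card h2
    rw [Multiset.card_add] at e1 e2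
    omega
  have hL : L - A ≤ L := tsub_le_self
  have key : ((L - A).map f).sum ≤ ((A - L).map f).sum := by
    by_cases hz : A - L = 0
    · rw [hz] at hc' ⊢
      rw [Multiset.card_zero, Multiset.card_eq_zero] at hc'
      rw [hc']
    · have hne : (A - L).toFinset.Nonempty := by
        rw [Multiset.toFinset_nonempty]; exact hz
      obtain ⟨c, hcm, hcmin⟩ := Finset.exists_min_image _ id hne
      have u1 : ((L - A).map f).sum ≤ Multiset.card ((L - A).map f) • f c := by
        apply Multiset.sum_le_card_nsmul
        intro y hy
        obtain ⟨x, hx, rfl⟩ := Multiset.mem_map.1 hy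
        exact hf (ho x (Multiset.mem_of_le hL hx) c
          (Multiset.mem_of_le hR (Multiset.mem_toFinset.1 hcm)))
      have u2 : Multiset.card ((A - L).map f) • f c ≤ ((A - L).map f).sum := by
        apply Multiset.card_nsmul_le_sum
        intro y hy
        obtain ⟨x, hx, rfl⟩ := Multiset.mem_map.1 hy
        exact hf (hcmin x (Multiset.mem_toFinset.2 hx))
      rw [Multiset.card_map] at u1 u2
      rw [hc'] at u1
      exact u1.trans u2
  have s1 := congrArg (fun X => (Multiset.map f X).sum) h1
  have s2 := congrArg (fun X => (Multiset.map f X).sum) h2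
  simp only [Multiset.map_add, Multiset.sum_add] at s1 s2
  linarith

lemma cost_le (A L R B : Multiset ℝ) (p q : ℝ) (hpq : p ≤ q)
    (h : L + R = A + B) (hc : Multiset.card L = Multiset.card A)
    (ho : ∀ a ∈ L, ∀ b ∈ R, a ≤ b) :
    SAE L + SAE R ≤ (A.map (fun x => |x - p|)).sum + (B.map (fun x => |x - q|)).sum := by
  have hf : Monotone (fun x : ℝ => |x - p| - |x - q|) := by
    intro x y hxy
    simp only
    rcases abs_cases (x - p) with h1 | h1 <;> rcases abs_cases (x - q) with h2 | h2 <;>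
    rcases abs_cases (y - p) with h3 | h3 <;> rcases abs_cases (y - q) with h4 | h4 <;> linarith
  have k := sum_map_mono_aux A L R B _ hf h hc ho
  rw [Multiset.sum_map_sub, Multiset.sum_map_sub] at k
  have s := congrArg (fun X => (Multiset.map (fun x => |x - q|) X).sum) h
  simp only [Multiset.map_add, Multiset.sum_add] at s
  have := sae_le L p
  have := sae_le R q
  linarith

/-- The sum-of-absolute-error cost is 2-partition ordered minimizable. -/
theorem sae_two_partition_ordered_minimizable
    (Ω A B : Multiset ℝ) (hpart : A + B = Ω) (hA : A ≠ 0) (hB : B ≠ 0) :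
    ∃ L R : Multiset ℝ, L + R = Ω ∧ PairwiseOrdered L R ∧
      ({Multiset.card L, Multiset.card R} : Multiset ℕ) =
        {Multiset.card A, Multiset.card B} ∧
      SAE L + SAE R ≤ SAE A + SAE B := by
  have hcard : Multiset.card A + Multiset.card B = Multiset.card Ω := by
    rw [← hpart, Multiset.card_add]
  obtain ⟨L, R, e1, c1, o1⟩ := split_exists Ω (Multiset.card A) (by omega)
  obtain ⟨L', R', e2, c2, o2⟩ := split_exists Ω (Multiset.card B) (by omega)
  have d1 : Multiset.card R = Multiset.card B := by
    have := congrArg Multiset.card e1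
    rw [Multiset.card_add] at this; omega
  have d2 : Multiset.card R' = Multiset.card A := by
    have := congrArg Multiset.card e2
    rw [Multiset.card_add] at this; omega
  by_cases g1 : SAE L + SAE R ≤ SAE A + SAE B
  · exact ⟨L, R, e1, Or.inl o1, by rw [c1, d1], g1⟩
  by_cases g2 : SAE L' + SAE R' ≤ SAE A + SAE B
  · exact ⟨L', R', e2, Or.inl o2, by rw [c2, d2]; exact Multiset.pair_comm _ _, g2⟩
  exfalso
  push Not at g1 g2
  obtain ⟨e, he, hl, hr⟩ : ∃ e : ℝ, 0 < e ∧ SAE A + SAE B + 2 * e ≤ SAE L + SAE R ∧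
      SAE A + SAE B + 2 * e ≤ SAE L' + SAE R' := by
    refine ⟨(min (SAE L + SAE R) (SAE L' + SAE R') - (SAE A + SAE B)) / 2, ?_, ?_, ?_⟩
    · have := lt_min g1 g2
      linarith
    · have := min_le_left (SAE L + SAE R) (SAE L' + SAE R')
      linarith
    · have := min_le_right (SAE L + SAE R) (SAE L' + SAE R')
      linarith
  obtain ⟨p, hp⟩ := sae_approx A e he
  obtain ⟨q, hq⟩ := sae_approx B e he
  rcases le_total p q with hpq | hpq
  · have := cost_le A L R B p q hpq (e1.trans hpart.symm) c1 o1
    linarith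
  · have := cost_le B L' R' A q p hpq (by rw [e2, ← hpart, add_comm]) c2 o2
    linarith
end

section
/- The round-down cost C_↓ is 2-partition ordered minimizable: for every finite multiset Ω of reals and every partition of Ω into two nonempty multisets A, B there exist pairwise ordered multisets L, R with L + R = Ω, whose multiset of cardinalities {|L|,|R|} equals {|A|,|B|}, and with C_↓(L) + C_↓(R) ≤ C_↓(A) + C_↓(B). -/
/-- Minimum of a (nonempty finite) multiset of reals. -/
noncomputable def mmin (X : Multiset ℝ) : ℝ := sInf {y : ℝ | y ∈ X}

/-- Round-down cost: `C_↓(X) = Σ_{x∈X} (x − min(X))`. -/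
noncomputable def Cdown (X : Multiset ℝ) : ℝ :=
  (X.map (fun x => x - mmin X)).sum

theorem mmin_spec (X : Multiset ℝ) (h : X ≠ 0) : mmin X ∈ X ∧ ∀ x ∈ X, mmin X ≤ x := by
  have hf : {y : ℝ | y ∈ X}.Finite := by
    have := X.toFinset.finite_toSet
    refine this.subset ?_
    intro y hy
    simpa using hy
  have hn : {y : ℝ | y ∈ X}.Nonempty := Multiset.exists_mem_of_ne_zero h
  exact ⟨hn.csInf_mem hf, fun x hx => csInf_le hf.bddBelow hx⟩

theorem Cdown_eq (X : Multiset ℝ) : Cdown X = X.sum - (Multiset.card X : ℝ) * mmin X := by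
  unfold Cdown
  rw [Multiset.sum_map_sub]
  simp

theorem exists_split (X : Multiset ℝ) (k : ℕ) (hk : k ≤ Multiset.card X) :
    ∃ L R : Multiset ℝ, L + R = X ∧ Multiset.card L = k ∧ ∀ a ∈ L, ∀ b ∈ R, a ≤ b := by
  have hs : (X.sort (· ≤ ·)).Pairwise (· ≤ ·) := Multiset.pairwise_sort X (· ≤ ·)
  refine ⟨((X.sort (· ≤ ·)).take k : List ℝ), ((X.sort (· ≤ ·)).drop k : List ℝ), ?_, ?_, ?_⟩
  · rw [Multiset.coe_add, List.take_append_drop, Multiset.sort_eq]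
  · simp [hk]
  · rw [← List.take_append_drop k (X.sort (· ≤ ·)), List.pairwise_append] at hs
    intro a ha b hb
    exact hs.2.2 a (by simpa using ha) b (by simpa using hb)

theorem main_aux (A B : Multiset ℝ) (hA : A ≠ 0) (hB : B ≠ 0) (hm : mmin A ≤ mmin B) :
    ∃ L R : Multiset ℝ, L + R = A + B ∧ PairwiseOrdered L R ∧
      Multiset.card L = Multiset.card A ∧ Multiset.card R = Multiset.card B ∧
      Cdown L + Cdown R ≤ Cdown A + Cdown B := by
  obtain ⟨L, R, h1, h2, h3⟩ := exists_split (A + B) (Multiset.card A) (by simp)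
  have h4 : Multiset.card R = Multiset.card B := by
    have := congrArg Multiset.card h1
    simp only [Multiset.card_add] at this
    omega
  have hL : L ≠ 0 := by
    rw [← Multiset.card_pos, h2]; exact Multiset.card_pos.2 hA
  have hR : R ≠ 0 := by
    rw [← Multiset.card_pos, h4]; exact Multiset.card_pos.2 hB
  refine ⟨L, R, h1, Or.inl h3, h2, h4, ?_⟩
  obtain ⟨a1, a2⟩ := mmin_spec A hA
  obtain ⟨b1, b2⟩ := mmin_spec B hB
  obtain ⟨l1, l2⟩ := mmin_spec L hL
  obtain ⟨r1, r2⟩ := mmin_spec R hR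
  have hl : mmin A ≤ mmin L := by
    have : mmin L ∈ A + B := h1 ▸ Multiset.mem_add.2 (Or.inl l1)
    rcases Multiset.mem_add.1 this with h | h
    · exact a2 _ h
    · exact hm.trans (b2 _ h)
  have hr : mmin B ≤ mmin R := by
    by_contra! hlt
    have e := congrArg (Multiset.countP (fun x => mmin R < x)) h1
    rw [Multiset.countP_add, Multiset.countP_add] at e
    have e1 : Multiset.countP (fun x => mmin R < x) L = 0 :=
      Multiset.countP_eq_zero.2 fun a ha => not_lt.2 (h3 a ha _ r1)
    have e2 : Multiset.countP (fun x => mmin R < x) B = Multiset.card B :=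
      Multiset.countP_eq_card.2 fun a ha => hlt.trans_le (b2 a ha)
    have e3 : Multiset.countP (fun x => mmin R < x) R ≠ Multiset.card R := fun h =>
      lt_irrefl _ (Multiset.countP_eq_card.1 h _ r1)
    have e4 := Multiset.countP_le_card (fun x => mmin R < x) R
    omega
  have hs := congrArg Multiset.sum h1
  simp only [Multiset.sum_add] at hs
  simp only [Cdown_eq, h2, h4]
  have := mul_le_mul_of_nonneg_left hl (Nat.cast_nonneg (α := ℝ) (Multiset.card A))
  have := mul_le_mul_of_nonneg_left hr (Nat.cast_nonneg (α := ℝ) (Multiset.card B))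
  linarith

/-- The round-down cost is 2-partition ordered minimizable. -/
theorem rounddown_two_partition_ordered_minimizable
    (Ω A B : Multiset ℝ) (hpart : A + B = Ω) (hA : A ≠ 0) (hB : B ≠ 0) :
    ∃ L R : Multiset ℝ, L + R = Ω ∧ PairwiseOrdered L R ∧
      ({Multiset.card L, Multiset.card R} : Multiset ℕ) =
        {Multiset.card A, Multiset.card B} ∧
      Cdown L + Cdown R ≤ Cdown A + Cdown B := by
  subst hpart
  rcases le_total (mmin A) (mmin B) with h | h
  · obtain ⟨L, R, h1, h2, h3, h4, h5⟩ := main_aux A B hA hB h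
    exact ⟨L, R, h1, h2, by rw [h3, h4], h5⟩
  · obtain ⟨L, R, h1, h2, h3, h4, h5⟩ := main_aux B A hB hA h
    exact ⟨L, R, by rw [h1, add_comm], h2, by rw [h3, h4, Multiset.pair_comm], by linarith⟩
end
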